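/- arXiv:1802.02327 — 2 statements merged into one kernel-verified Lean document; each statement's English description precedes it below -/
import Mathlib

section
/- Let 0 < μ < 1 and let u : ℝ → ℝ be smooth with compact support. Then ∫_ℝ u(x) · (I₋^μ u)(x) dx = cos(μπ/2) · ∫_ℝ |2πξ|^{−μ} |û(ξ)|² dξ, where û is the Fourier transform of u; in particular this quantity is nonnegative. -/
open MeasureTheory Real Set FourierTransform

/-- Left Riemann–Liouville fractional integral of order `μ` on the whole real line:
`(I₋^μ u)(x) = (1/Γ(μ)) ∫_{-∞}^x (x−s)^{μ−1} u(s) ds`. -/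
noncomputable def leftRLIntegral (μ : ℝ) (u : ℝ → ℝ) (x : ℝ) : ℝ :=
  (1 / Real.Gamma μ) * ∫ s in Set.Iio x, (x - s) ^ (μ - 1) * u s

/-! By Fubini, `Γ(μ) ∫ u · I₋^μ u = ∫_{t > 0} t^{μ-1} A(t) dt`, where `A` is the autocorrelation
of `u`. By Plancherel `A` is the Fourier transform of the power spectrum `|û|²`, so the right-hand
side is the Mellin transform of a Fourier transform. Abel summation computes it: with a factor
`e^{-εt}` inserted, Fubini and Euler's integral with the complex rate `ε + 2πiξ` turn it into
`Γ(μ) ∫ (ε + 2πiξ)^{-μ} |û(ξ)|² dξ`. As `ε → 0` the kernel becomes `(2πiξ)^{-μ}`, whose real part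
is `|2πξ|^{-μ} cos(μπ/2)`. -/

open Filter SchwartzMap
open scoped Topology

section Plancherel

variable {V F : Type*} [NormedAddCommGroup V] [InnerProductSpace ℝ V] [FiniteDimensional ℝ V]
  [MeasurableSpace V] [BorelSpace V] [NormedAddCommGroup F] [InnerProductSpace ℂ F]
  [CompleteSpace F] {f g : V → F}

-- Both sides define the same tempered distribution, because each of them moves the transform onto
-- the test function.
theorem fourier_toLp_ae_eq (hf : Integrable f) (hf2 : MemLp f 2) :
    (𝓕 (hf2.toLp f) : Lp F 2 (volume : Measure V)) =ᵐ[volume] 𝓕 f := by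
  have hcont : Continuous (𝓕 f) :=
    VectorFourier.fourierIntegral_continuous continuous_fourierChar continuous_inner hf
  refine ae_eq_of_integral_contDiff_smul_eq
    ((Lp.memLp _).locallyIntegrable one_le_two) hcont.locallyIntegrable fun ψ hψ hψc => ?_
  let Ψ : 𝓢(V, ℂ) := HasCompactSupport.toSchwartzMap (f := fun x => (ψ x : ℂ))
    (hψc.comp_left Complex.ofReal_zero) (Complex.ofRealCLM.contDiff.comp hψ)
  have hΨ (x : V) (y : F) : ψ x • y = Ψ x • y := (Complex.coe_smul (ψ x) y).symm
  simp_rw [hΨ]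
  calc ∫ x, Ψ x • (𝓕 (hf2.toLp f) : Lp F 2 (volume : Measure V)) x
      = ∫ x, (𝓕 Ψ) x • hf2.toLp f x := by
        rw [← Lp.toTemperedDistribution_apply, ← Lp.fourier_toTemperedDistribution_eq,
          TemperedDistribution.fourier_apply, Lp.toTemperedDistribution_apply]
    _ = ∫ x, 𝓕 (Ψ : V → ℂ) x • f x := by
        refine integral_congr_ae ?_
        filter_upwards [hf2.coeFn_toLp] with x hx
        rw [hx, fourier_coe]
    _ = ∫ x, Ψ x • 𝓕 f x := by
        simpa using! VectorFourier.integral_fourierIntegral_smul_eq_flip (L := innerₗ V)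
          continuous_fourierChar continuous_inner Ψ.integrable hf

theorem integrable_norm_fourier_sq (hf : Integrable f) (hf2 : MemLp f 2) :
    Integrable fun ξ => ‖𝓕 f ξ‖ ^ 2 := by
  have h : MemLp (𝓕 f) 2 := (memLp_congr_ae (fourier_toLp_ae_eq hf hf2)).1 (Lp.memLp _)
  exact (memLp_two_iff_integrable_sq_norm h.1).1 h

theorem integral_inner_fourier_fourier (hf : Integrable f) (hf2 : MemLp f 2) (hg : Integrable g)
    (hg2 : MemLp g 2) : ∫ ξ, inner ℂ (𝓕 f ξ) (𝓕 g ξ) = ∫ x, inner ℂ (f x) (g x) := by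
  have hLp := Lp.inner_fourier_eq (hf2.toLp f) (hg2.toLp g)
  rw [L2.inner_def, L2.inner_def] at hLp
  refine (integral_congr_ae ?_).trans (hLp.trans (integral_congr_ae ?_))
  · filter_upwards [fourier_toLp_ae_eq hf hf2, fourier_toLp_ae_eq hg hg2] with ξ hfξ hgξ
    rw [hfξ, hgξ]
  · filter_upwards [hf2.coeFn_toLp, hg2.coeFn_toLp] with x hfx hgx
    rw [hfx, hgx]

end Plancherel

section Autocorrelation

variable {V : Type*} [NormedAddCommGroup V] [InnerProductSpace ℝ V] [FiniteDimensional ℝ V]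
  [MeasurableSpace V] [BorelSpace V] {u : V → ℝ}

/-- The autocorrelation `t ↦ ∫ u(x) u(x - t) dx`, which turns the bilinear form
`∫ u(x) (k ⋆ u)(x) dx` of a convolution kernel `k` into `∫ k(t) autocorrelation u t dt`. -/
noncomputable def autocorrelation (u : V → ℝ) (t : V) : ℝ := ∫ x, u x * u (x - t)

theorem integrable_mul_comp_sub (hu : Integrable u) :
    Integrable (fun p : V × V => u p.1 * u (p.1 - p.2)) := by
  simpa [Function.comp_def] using!
    (hu.convolution_integrand (ContinuousLinearMap.mul ℝ ℝ) hu.comp_neg).swap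

theorem integrable_autocorrelation (hu : Integrable u) : Integrable (autocorrelation u) :=
  (integrable_mul_comp_sub hu).integral_prod_right

theorem fourier_comp_sub_right (f : V → ℂ) (t ξ : V) :
    𝓕 (fun x => f (x - t)) ξ = fourierChar (-inner ℝ ξ t) • 𝓕 f ξ := by
  simpa [sub_eq_add_neg, Function.comp_def, real_inner_comm] using! congrFun
    (VectorFourier.fourierIntegral_comp_add_right fourierChar volume (innerₗ V) f (-t)) ξ

theorem autocorrelation_eq_fourier_norm_fourier_sq (hu : Integrable u) (hu2 : MemLp u 2) (t : V) :
    (autocorrelation u t : ℂ) =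
      𝓕 (fun ξ => ((‖𝓕 (fun x => (u x : ℂ)) ξ‖ ^ 2 : ℝ) : ℂ)) t := by
  have hτ : MeasurePreserving (fun x : V => x - t) := measurePreserving_sub_right volume t
  calc (autocorrelation u t : ℂ)
      = ∫ x, inner ℂ (u x : ℂ) (u (x - t) : ℂ) := by
        rw [autocorrelation, ← integral_complex_ofReal]
        congr 1 with x
        simp [mul_comm]
    _ = ∫ ξ, inner ℂ (𝓕 (fun x => (u x : ℂ)) ξ) (𝓕 (fun x => (u (x - t) : ℂ)) ξ) :=
        (integral_inner_fourier_fourier hu.ofReal hu2.ofReal (hu.comp_sub_right t).ofReal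
          (hu2.comp_measurePreserving hτ).ofReal).symm
    _ = _ := by
        rw [fourier_eq]
        congr 1 with ξ
        rw [fourier_comp_sub_right (fun x => (u x : ℂ)), Circle.smul_def, Circle.smul_def,
          inner_smul_right, inner_self_eq_norm_sq_to_K]
        simp

theorem abs_autocorrelation_le (hu : Integrable u) (hu2 : MemLp u 2) (t : V) :
    |autocorrelation u t| ≤ ∫ ξ, ‖𝓕 (fun x => (u x : ℂ)) ξ‖ ^ 2 := by
  rw [← Real.norm_eq_abs, ← Complex.norm_real, autocorrelation_eq_fourier_norm_fourier_sq hu hu2]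
  refine (VectorFourier.norm_fourierIntegral_le_integral_norm _ _ _ _ _).trans_eq ?_
  simp

end Autocorrelation

section ConvolutionForm

variable {V : Type*} [NormedAddCommGroup V] [InnerProductSpace ℝ V] [FiniteDimensional ℝ V]
  [MeasurableSpace V] [BorelSpace V] {u k : V → ℝ} {ν : Measure V} [SFinite ν]

theorem integrable_mul_mul_comp_sub (hu : Integrable u) (hν : ν ≪ volume)
    (hk : AEStronglyMeasurable k ν)
    (hkA : Integrable (fun t => k t * autocorrelation (fun x => |u x|) t) ν) :
    Integrable (fun p : V × V => k p.2 * (u p.1 * u (p.1 - p.2))) (volume.prod ν) := by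
  have huu := integrable_mul_comp_sub hu
  refine (integrable_prod_iff' (hk.comp_snd.mul
    (huu.1.mono_ac (Measure.AbsolutelyContinuous.rfl.prod hν)))).2 ⟨?_, ?_⟩
  · filter_upwards [hν.ae_le huu.prod_left_ae] with t ht
    exact ht.const_mul (k t)
  · refine hkA.norm.congr (.of_forall fun t => ?_)
    have hA : 0 ≤ autocorrelation (fun x => |u x|) t :=
      integral_nonneg fun x => mul_nonneg (abs_nonneg _) (abs_nonneg _)
    simp only [norm_mul, norm_of_nonneg hA, Pi.mul_apply, integral_const_mul, Real.norm_eq_abs]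
    rfl

theorem integral_mul_integral_mul_comp_sub (hu : Integrable u) (hν : ν ≪ volume)
    (hk : AEStronglyMeasurable k ν)
    (hkA : Integrable (fun t => k t * autocorrelation (fun x => |u x|) t) ν) :
    ∫ x, u x * ∫ t, k t * u (x - t) ∂ν = ∫ t, k t * autocorrelation u t ∂ν := by
  simp_rw [autocorrelation, ← integral_const_mul, mul_left_comm (u _)]
  exact integral_integral_swap (integrable_mul_mul_comp_sub hu hν hk hkA)

end ConvolutionForm

section PowerWeight

variable {V F : Type*} [NormedAddCommGroup V] [NormedSpace ℝ V] [FiniteDimensional ℝ V]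
  [MeasurableSpace V] [BorelSpace V] {ν : Measure V} [ν.IsAddHaarMeasure]
  [NormedAddCommGroup F] [NormedSpace ℝ F] {f : V → F} {s C : ℝ}

theorem integrable_norm_rpow_smul (hs : -Module.finrank ℝ V < s) (hs0 : s ≤ 0)
    (hf : Integrable f ν) (hC : ∀ x, ‖f x‖ ≤ C) : Integrable (fun x => ‖x‖ ^ s • f x) ν := by
  have hmeas : AEStronglyMeasurable (fun x : V => ‖x‖ ^ s) ν :=
    (measurable_norm.pow_const s).aestronglyMeasurable
  have hball : IntegrableOn (fun x : V => ‖x‖ ^ s) (Metric.closedBall 0 1) ν := by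
    refine (locallyIntegrable_of_norm_le_rpow (α := -s) (C := 1) ?_ (by linarith) ?_
      hmeas).integrableOn_isCompact (isCompact_closedBall _ _)
    · exact_mod_cast (by linarith : (0 : ℝ) < Module.finrank ℝ V)
    · simp [abs_of_nonneg, rpow_nonneg]
  rw [← integrableOn_univ, ← Set.union_compl_self (Metric.closedBall (0 : V) 1)]
  refine IntegrableOn.union ?_ ?_
  · exact hball.smul_of_top_left (memLp_top_of_bound hf.1.restrict C (.of_forall hC))
  · refine hf.norm.integrableOn.mono' (hmeas.smul hf.1).restrict ?_
    filter_upwards [ae_restrict_mem Metric.isClosed_closedBall.measurableSet.compl] with x hx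
    have hx1 : 1 ≤ ‖x‖ := le_of_lt (by simpa using hx)
    rw [norm_smul, norm_of_nonneg (by positivity)]
    exact mul_le_of_le_one_left (norm_nonneg _) (rpow_le_one_of_one_le_of_nonpos hx1 hs0)

end PowerWeight

theorem re_ofReal_mul_I_cpow_ofReal (y a : ℝ) :
    (((y : ℂ) * Complex.I) ^ (a : ℂ)).re = |y| ^ a * Real.cos (a * π / 2) := by
  rw [Complex.cpow_ofReal_re, norm_mul, Complex.norm_I, mul_one, Complex.norm_real,
    Real.norm_eq_abs]
  rcases lt_trichotomy y 0 with hy | rfl | hy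
  · rw [← neg_mul_neg (y : ℂ), ← Complex.ofReal_neg, Complex.arg_real_mul _ (neg_pos.2 hy),
      Complex.arg_neg_I, ← Real.cos_neg (-(π / 2) * a)]
    ring_nf
  · rcases eq_or_ne a 0 with rfl | ha <;> simp [*]
  · rw [Complex.arg_real_mul _ hy, Complex.arg_I]
    ring_nf

theorem norm_cpow_neg_le_rpow_abs_im {z s : ℂ} (hz : z.im ≠ 0) (hs : 0 ≤ s.re) :
    ‖z ^ (-s)‖ ≤ Real.exp (π * |s.im|) * |z.im| ^ (-s.re) := by
  have him : 0 < |z.im| := abs_pos.2 hz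
  calc ‖z ^ (-s)‖ ≤ ‖z‖ ^ (-s.re) / Real.exp (z.arg * -s.im) := by
        simpa using Complex.norm_cpow_le z (-s)
    _ = Real.exp (z.arg * s.im) * ‖z‖ ^ (-s.re) := by
        rw [mul_neg, Real.exp_neg, div_inv_eq_mul, mul_comm]
    _ ≤ Real.exp (π * |s.im|) * |z.im| ^ (-s.re) := by
        gcongr ?_ * ?_
        · refine Real.exp_le_exp.2 ((le_abs_self _).trans ?_)
          rw [abs_mul]
          gcongr
          exact Complex.abs_arg_le_pi z
        · exact rpow_le_rpow_of_nonpos him (Complex.abs_im_le_norm z) (by linarith)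

theorem mul_exp_neg_add_mul_le (b t : ℝ) {δ : ℝ} (hδ : 0 < δ) :
    t * Real.exp (-((b + δ) * t)) ≤ δ⁻¹ * Real.exp (-(b * t)) := by
  rw [inv_mul_eq_div, le_div_iff₀ hδ]
  calc t * Real.exp (-((b + δ) * t)) * δ = δ * t * Real.exp (-((b + δ) * t)) := by ring
    _ ≤ Real.exp (δ * t) * Real.exp (-((b + δ) * t)) := by
      gcongr
      linarith [Real.add_one_le_exp (δ * t)]
    _ = Real.exp (-(b * t)) := by rw [← Real.exp_add]; ring_nf

section Laplace

variable {E : Type*} [NormedAddCommGroup E] [NormedSpace ℂ E] {f : ℝ → E} {σ : ℝ}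

theorem norm_cexp_neg_mul_mul_neg_smul_le {b δ t : ℝ} {r : ℂ} (hδ : 0 < δ) (ht : 0 ≤ t)
    (hr : b + δ ≤ r.re) (v : E) :
    ‖(Complex.exp (-(r * t)) * -t) • v‖ ≤ δ⁻¹ * ‖Real.exp (-(b * t)) • v‖ := by
  have hexp : t * Real.exp (-(r.re * t)) ≤ δ⁻¹ * Real.exp (-(b * t)) :=
    (mul_le_mul_of_nonneg_left (by gcongr) ht).trans (mul_exp_neg_add_mul_le b t hδ)
  calc ‖(Complex.exp (-(r * t)) * -t) • v‖ = t * Real.exp (-(r.re * t)) * ‖v‖ := by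
        simp [norm_smul, Complex.norm_exp, abs_of_nonneg ht, mul_comm t]
    _ ≤ δ⁻¹ * Real.exp (-(b * t)) * ‖v‖ := by gcongr
    _ = δ⁻¹ * ‖Real.exp (-(b * t)) • v‖ := by simp [norm_smul, mul_assoc]

theorem differentiableOn_integral_cexp_neg_mul_smul_Ioi
    (hfm : AEStronglyMeasurable f (volume.restrict (Ioi 0)))
    (hf : ∀ b > σ, IntegrableOn (fun t => Real.exp (-(b * t)) • f t) (Ioi 0)) :
    DifferentiableOn ℂ (fun r : ℂ => ∫ t : ℝ in Ioi 0, Complex.exp (-(r * t)) • f t)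
      {r | σ < r.re} := by
  have hm (k : ℝ → ℂ) (hk : Continuous k) :
      AEStronglyMeasurable (fun t => k t • f t) (volume.restrict (Ioi 0)) :=
    hk.aestronglyMeasurable.smul hfm
  intro r₀ (hr₀ : σ < r₀.re)
  obtain ⟨δ, hδ, hδr⟩ : ∃ δ > 0, σ + δ + δ < r₀.re :=
    ⟨(r₀.re - σ) / 3, by linarith, by linarith⟩
  have hint : IntegrableOn (fun t : ℝ => Complex.exp (-(r₀ * t)) • f t) (Ioi 0) := by
    refine (hf r₀.re hr₀).norm.mono' (hm _ (by fun_prop)) (.of_forall fun t => ?_)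
    simp [norm_smul, Complex.norm_exp]
  refine (hasDerivAt_integral_of_dominated_loc_of_deriv_le
    (F := fun r t => Complex.exp (-(r * t)) • f t)
    (F' := fun r t => (Complex.exp (-(r * t)) * -t) • f t)
    (bound := fun t => δ⁻¹ * ‖Real.exp (-((σ + δ) * t)) • f t‖)
    ((isOpen_lt continuous_const Complex.continuous_re).mem_nhds hδr)
    (.of_forall fun r => hm _ (by fun_prop)) hint (hm _ (by fun_prop)) ?_
    ((hf _ (by linarith)).norm.const_mul _) ?_).2.differentiableAt.differentiableWithinAt
  · filter_upwards [ae_restrict_mem measurableSet_Ioi] with t (ht : 0 < t) r hr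
    exact norm_cexp_neg_mul_mul_neg_smul_le hδ ht.le (le_of_lt hr) (f t)
  · refine .of_forall fun t r _ => HasDerivAt.smul_const ?_ _
    simpa using ((hasDerivAt_mul_const (t : ℂ)).neg).cexp

end Laplace

theorem integrableOn_rpow_mul_exp_neg_mul_Ioi {a b : ℝ} (ha : 0 < a) (hb : 0 < b) :
    IntegrableOn (fun t : ℝ => t ^ (a - 1) * Real.exp (-(b * t))) (Ioi 0) := by
  simpa using integrableOn_rpow_mul_exp_neg_mul_rpow (s := a - 1) (p := 1) (by linarith) one_pos hb

theorem eqOn_re_gt_of_forall_ofReal_eq {E : Type*} [NormedAddCommGroup E] [NormedSpace ℂ E]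
    [CompleteSpace E] {f g : ℂ → E} {σ : ℝ} (hf : DifferentiableOn ℂ f {z | σ < z.re})
    (hg : DifferentiableOn ℂ g {z | σ < z.re}) (h : ∀ x : ℝ, σ < x → f x = g x) :
    EqOn f g {z | σ < z.re} := by
  have hopen : IsOpen {z : ℂ | σ < z.re} := isOpen_lt continuous_const Complex.continuous_re
  refine (hf.analyticOnNhd hopen).eqOn_of_preconnected_of_frequently_eq (hg.analyticOnNhd hopen)
    (convex_halfSpace_re_gt σ).isPreconnected (z₀ := ((σ + 1 : ℝ) : ℂ)) (by simp) ?_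
  have hreal : Tendsto ((↑) : ℝ → ℂ) (𝓝[≠] (σ + 1)) (𝓝[≠] ((σ + 1 : ℝ) : ℂ)) :=
    Complex.continuous_ofReal.continuousWithinAt.tendsto_nhdsWithin fun _ hx =>
      Complex.ofReal_injective.ne hx
  refine hreal.frequently (Eventually.frequently ?_)
  filter_upwards [mem_nhdsWithin_of_mem_nhds (Ioi_mem_nhds (lt_add_one σ))] with x hx
  exact h x hx

theorem integral_cpow_mul_cexp_neg_mul_Ioi {a r : ℂ} (ha : 0 < a.re) (hr : 0 < r.re) :
    ∫ t : ℝ in Ioi 0, (t : ℂ) ^ (a - 1) * Complex.exp (-(r * t)) =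
      r ^ (-a) * Complex.Gamma a := by
  have hL : DifferentiableOn ℂ (fun r : ℂ => ∫ t : ℝ in Ioi 0,
      (t : ℂ) ^ (a - 1) * Complex.exp (-(r * t))) {r | 0 < r.re} := by
    have hcpow : AEStronglyMeasurable (fun t : ℝ => (t : ℂ) ^ (a - 1)) (volume.restrict (Ioi 0)) :=
      Measurable.aestronglyMeasurable (by fun_prop)
    simp_rw [mul_comm, ← smul_eq_mul]
    refine differentiableOn_integral_cexp_neg_mul_smul_Ioi hcpow fun b hb => ?_
    have hexp : Continuous fun t : ℝ => Real.exp (-(b * t)) := by fun_prop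
    refine (integrableOn_rpow_mul_exp_neg_mul_Ioi ha hb).mono'
      (hexp.aestronglyMeasurable.smul hcpow) ?_
    filter_upwards [ae_restrict_mem measurableSet_Ioi] with t ht
    rw [norm_smul, Complex.norm_cpow_eq_rpow_re_of_pos ht, mul_comm]
    simp
  have hR : DifferentiableOn ℂ (fun r : ℂ => r ^ (-a) * Complex.Gamma a) {r | 0 < r.re} :=
    fun z hz => ((differentiableAt_id.cpow_const (Or.inl hz)).mul_const _).differentiableWithinAt
  refine eqOn_re_gt_of_forall_ofReal_eq hL hR (fun x hx => ?_) hr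
  have harg : (x : ℂ).arg ≠ π := by simpa [Complex.arg_ofReal_of_nonneg hx.le] using pi_ne_zero.symm
  rw [Complex.integral_cpow_mul_exp_neg_mul_Ioi ha hx, one_div, Complex.inv_cpow _ _ harg,
    Complex.cpow_neg]

theorem mellinConvergent_ofReal {f : ℝ → ℝ} {a : ℝ}
    (hf : IntegrableOn (fun t => t ^ (a - 1) * f t) (Ioi 0)) :
    MellinConvergent (fun t => (f t : ℂ)) a := by
  refine IntegrableOn.congr_fun (f := fun t => ((t ^ (a - 1) * f t : ℝ) : ℂ)) hf.ofReal
    (fun t (ht : 0 < t) => ?_) measurableSet_Ioi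
  simp [Complex.ofReal_cpow ht.le]

theorem mellin_ofReal (f : ℝ → ℝ) (a : ℝ) :
    mellin (fun t => (f t : ℂ)) a = (∫ t in Ioi 0, t ^ (a - 1) * f t : ℝ) := by
  rw [mellin, ← integral_complex_ofReal]
  refine setIntegral_congr_fun measurableSet_Ioi fun t (ht : 0 < t) => ?_
  simp [Complex.ofReal_cpow ht.le]

section Mellin

variable {E : Type*} [NormedAddCommGroup E] [NormedSpace ℂ E] {s : ℂ}

theorem tendsto_mellin_cexp_neg_mul_smul {f : ℝ → E} (hf : MellinConvergent f s) :
    Tendsto (fun ε : ℝ => mellin (fun t => Complex.exp (-(ε * t)) • f t) s) (𝓝[>] 0)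
      (𝓝 (mellin f s)) := by
  have hexp (ε : ℝ) : Continuous fun t : ℝ => Complex.exp (-(ε * t)) := by fun_prop
  simp only [mellin, smul_comm _ (Complex.exp _)]
  refine tendsto_integral_filter_of_dominated_convergence (fun t => ‖(t : ℂ) ^ (s - 1) • f t‖)
    (.of_forall fun ε => (hexp ε).aestronglyMeasurable.smul hf.1) ?_ hf.norm ?_
  · filter_upwards [self_mem_nhdsWithin] with ε (hε : 0 < ε)
    filter_upwards [ae_restrict_mem measurableSet_Ioi] with t (ht : 0 < t)
    rw [norm_smul]
    refine mul_le_of_le_one_left (norm_nonneg _) ?_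
    simpa [Complex.norm_exp] using mul_nonneg hε.le ht.le
  · refine .of_forall fun t => Tendsto.mono_left ?_ nhdsWithin_le_nhds
    have hcont : Continuous fun ε : ℝ => Complex.exp (-(ε * t)) • (t : ℂ) ^ (s - 1) • f t := by
      fun_prop
    simpa using hcont.tendsto 0

variable {φ : ℝ → E}

theorem integrable_cpow_mul_cexp_neg_mul_smul (hs : 0 < s.re) {ε : ℝ} (hε : 0 < ε)
    (hφ : Integrable φ) :
    Integrable (fun p : ℝ × ℝ => ((p.1 : ℂ) ^ (s - 1) *
      Complex.exp (-((ε + (2 * π * p.2 : ℝ) * Complex.I) * p.1))) • φ p.2)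
      ((volume.restrict (Ioi 0)).prod volume) := by
  have hmeas : Measurable fun p : ℝ × ℝ => (p.1 : ℂ) ^ (s - 1) *
      Complex.exp (-((ε + (2 * π * p.2 : ℝ) * Complex.I) * p.1)) := by fun_prop
  refine ((integrableOn_rpow_mul_exp_neg_mul_Ioi hs hε).mul_prod hφ.norm).mono'
    (hmeas.aestronglyMeasurable.smul hφ.1.comp_snd) ?_
  filter_upwards [Measure.quasiMeasurePreserving_fst.ae (ae_restrict_mem measurableSet_Ioi)]
    with ⟨t, ξ⟩ ht
  simp [norm_smul, Complex.norm_cpow_eq_rpow_re_of_pos ht, Complex.norm_exp]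

theorem mellin_cexp_neg_mul_smul_fourier [CompleteSpace E] (hs : 0 < s.re) {ε : ℝ} (hε : 0 < ε)
    (hφ : Integrable φ) :
    mellin (fun t => Complex.exp (-(ε * t)) • 𝓕 φ t) s =
      Complex.Gamma s • ∫ ξ : ℝ, (ε + (2 * π * ξ : ℝ) * Complex.I) ^ (-s) • φ ξ := by
  calc ∫ t : ℝ in Ioi 0, (t : ℂ) ^ (s - 1) • Complex.exp (-(ε * t)) • 𝓕 φ t
      = ∫ t : ℝ in Ioi 0, ∫ ξ : ℝ, ((t : ℂ) ^ (s - 1) *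
          Complex.exp (-((ε + (2 * π * ξ : ℝ) * Complex.I) * t))) • φ ξ := by
        congr 1 with t
        rw [Real.fourier_eq', ← integral_smul, ← integral_smul]
        congr 1 with ξ
        rw [smul_smul, smul_smul, mul_assoc, ← Complex.exp_add]
        congr 3
        push_cast
        rw [real_inner_comm]
        simp only [neg_mul, RCLike.inner_apply, conj_trivial, Complex.ofReal_mul]
        ring
    _ = ∫ ξ : ℝ, ∫ t : ℝ in Ioi 0, ((t : ℂ) ^ (s - 1) *
          Complex.exp (-((ε + (2 * π * ξ : ℝ) * Complex.I) * t))) • φ ξ :=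
        integral_integral_swap (integrable_cpow_mul_cexp_neg_mul_smul hs hε hφ)
    _ = Complex.Gamma s • ∫ ξ : ℝ, (ε + (2 * π * ξ : ℝ) * Complex.I) ^ (-s) • φ ξ := by
        rw [← integral_smul]
        congr 1 with ξ
        rw [integral_smul_const, integral_cpow_mul_cexp_neg_mul_Ioi hs (by simpa using hε),
          smul_smul, mul_comm]

theorem norm_add_mul_I_cpow_neg_smul_le (hs : 0 ≤ s.re) (ε : ℝ) {ξ : ℝ} (hξ : ξ ≠ 0) (v : E) :
    ‖(ε + (2 * π * ξ : ℝ) * Complex.I) ^ (-s) • v‖ ≤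
      Real.exp (π * |s.im|) * (2 * π) ^ (-s.re) * ‖‖ξ‖ ^ (-s.re) • v‖ := by
  set z : ℂ := ε + (2 * π * ξ : ℝ) * Complex.I
  have him : z.im = 2 * π * ξ := by simp [z]
  have hK := norm_cpow_neg_le_rpow_abs_im (him ▸ mul_ne_zero two_pi_pos.ne' hξ) hs
  rw [him, abs_mul, abs_of_pos two_pi_pos, mul_rpow two_pi_pos.le (abs_nonneg ξ)] at hK
  rw [norm_smul, norm_smul, norm_of_nonneg (by positivity), Real.norm_eq_abs, ← mul_assoc,
    mul_assoc (Real.exp _)]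
  gcongr

theorem aestronglyMeasurable_add_mul_I_cpow_neg_smul (ε : ℝ) (hφ : AEStronglyMeasurable φ) :
    AEStronglyMeasurable fun ξ : ℝ => (ε + (2 * π * ξ : ℝ) * Complex.I) ^ (-s) • φ ξ :=
  AEStronglyMeasurable.smul (Measurable.aestronglyMeasurable (by fun_prop)) hφ

theorem integrable_mul_I_cpow_neg_smul (hs : 0 ≤ s.re) (hφ : AEStronglyMeasurable φ)
    (hφs : Integrable fun ξ => ‖ξ‖ ^ (-s.re) • φ ξ) :
    Integrable fun ξ : ℝ => ((2 * π * ξ : ℝ) * Complex.I) ^ (-s) • φ ξ := by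
  refine (hφs.norm.const_mul (Real.exp (π * |s.im|) * (2 * π) ^ (-s.re))).mono' ?_ ?_
  · simpa using aestronglyMeasurable_add_mul_I_cpow_neg_smul 0 hφ
  · filter_upwards [Measure.ae_ne volume (0 : ℝ)] with ξ hξ
    simpa using norm_add_mul_I_cpow_neg_smul_le hs 0 hξ (φ ξ)

theorem tendsto_integral_add_mul_I_cpow_neg_smul (hs : 0 ≤ s.re) (hφ : AEStronglyMeasurable φ)
    (hφs : Integrable fun ξ => ‖ξ‖ ^ (-s.re) • φ ξ) :
    Tendsto (fun ε : ℝ => ∫ ξ : ℝ, (ε + (2 * π * ξ : ℝ) * Complex.I) ^ (-s) • φ ξ) (𝓝 0)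
      (𝓝 (∫ ξ : ℝ, ((2 * π * ξ : ℝ) * Complex.I) ^ (-s) • φ ξ)) := by
  have hne : ∀ᵐ ξ : ℝ, ξ ≠ 0 := Measure.ae_ne volume 0
  refine tendsto_integral_filter_of_dominated_convergence _
    (.of_forall fun ε => aestronglyMeasurable_add_mul_I_cpow_neg_smul ε hφ)
    (.of_forall fun ε => hne.mono fun ξ hξ => norm_add_mul_I_cpow_neg_smul_le hs ε hξ (φ ξ))
    (hφs.norm.const_mul _) ?_
  filter_upwards [hne] with ξ hξ
  have hslit : ((0 : ℝ) : ℂ) + (2 * π * ξ : ℝ) * Complex.I ∈ Complex.slitPlane :=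
    Or.inr (by simpa using hξ)
  have hbase : ContinuousAt (fun ε : ℝ => (ε : ℂ) + (2 * π * ξ : ℝ) * Complex.I) 0 := by
    fun_prop
  simpa using! ((hbase.cpow continuousAt_const hslit).smul continuousAt_const).tendsto

theorem mellin_fourier [CompleteSpace E] (hs : 0 < s.re) (hφ : Integrable φ)
    (hφs : Integrable fun ξ => ‖ξ‖ ^ (-s.re) • φ ξ) (hconv : MellinConvergent (𝓕 φ) s) :
    mellin (𝓕 φ) s = Complex.Gamma s • ∫ ξ : ℝ, ((2 * π * ξ : ℝ) * Complex.I) ^ (-s) • φ ξ := by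
  refine tendsto_nhds_unique (tendsto_mellin_cexp_neg_mul_smul hconv) ?_
  refine (((tendsto_integral_add_mul_I_cpow_neg_smul hs.le hφ.1 hφs).mono_left
    nhdsWithin_le_nhds).const_smul (Complex.Gamma s)).congr' ?_
  filter_upwards [self_mem_nhdsWithin] with ε hε
  exact (mellin_cexp_neg_mul_smul_fourier hs hε hφ).symm

end Mellin

theorem re_mellin_fourier_ofReal {φ : ℝ → ℝ} {a : ℝ} (ha : 0 < a) (hφ : Integrable φ)
    (hφa : Integrable fun ξ => ‖ξ‖ ^ (-a) * φ ξ)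
    (hconv : MellinConvergent (𝓕 (fun ξ => (φ ξ : ℂ))) a) :
    (mellin (𝓕 (fun ξ => (φ ξ : ℂ))) a).re =
      Real.Gamma a * (Real.cos (a * π / 2) * ∫ ξ : ℝ, |2 * π * ξ| ^ (-a) * φ ξ) := by
  have hφa' : Integrable fun ξ => ‖ξ‖ ^ (-(a : ℂ).re) • (φ ξ : ℂ) := by
    simpa using hφa.ofReal (𝕜 := ℂ)
  have hK := integrable_mul_I_cpow_neg_smul (s := a) ha.le hφ.ofReal.1 hφa'
  rw [mellin_fourier (s := a) ha hφ.ofReal hφa' hconv, Complex.Gamma_ofReal, smul_eq_mul,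
    Complex.re_ofReal_mul, ← Complex.reCLM_apply, ← Complex.reCLM.integral_comp_comm hK,
    ← integral_const_mul (Real.cos _)]
  congr 2 with ξ
  rw [Complex.reCLM_apply, smul_eq_mul, Complex.re_mul_ofReal, ← Complex.ofReal_neg,
    re_ofReal_mul_I_cpow_ofReal, neg_mul, neg_div, Real.cos_neg]
  ring

section RiemannLiouville

variable {u : ℝ → ℝ} {μ : ℝ}

theorem integral_Iio_mul_comp_sub (k u : ℝ → ℝ) (x : ℝ) :
    ∫ s in Iio x, k (x - s) * u s = ∫ t in Ioi 0, k t * u (x - t) := by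
  rw [← integral_indicator measurableSet_Iio, ← integral_indicator measurableSet_Ioi,
    ← integral_sub_left_eq_self _ volume x]
  congr 1 with t
  by_cases ht : 0 < t <;> simp [ht]

theorem integrableOn_rpow_mul_autocorrelation (hμ0 : 0 < μ) (hμ1 : μ ≤ 1) (hu : Integrable u)
    (hu2 : MemLp u 2) : IntegrableOn (fun t => t ^ (μ - 1) * autocorrelation u t) (Ioi 0) := by
  have hR : Integrable fun t : ℝ => ‖t‖ ^ (μ - 1) • autocorrelation u t :=
    integrable_norm_rpow_smul (by simpa using hμ0) (by linarith) (integrable_autocorrelation hu)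
      (abs_autocorrelation_le hu hu2)
  refine hR.integrableOn.congr_fun (fun t (ht : 0 < t) => ?_) measurableSet_Ioi
  simp only [norm_of_nonneg ht.le, smul_eq_mul]

theorem integral_mul_leftRLIntegral (hμ0 : 0 < μ) (hμ1 : μ ≤ 1) (hu : Integrable u)
    (hu2 : MemLp u 2) :
    ∫ x, u x * leftRLIntegral μ u x =
      (1 / Real.Gamma μ) * ∫ t in Ioi 0, t ^ (μ - 1) * autocorrelation u t := by
  have hpow : Measurable fun t : ℝ => t ^ (μ - 1) := by fun_prop
  simp_rw [leftRLIntegral, integral_Iio_mul_comp_sub (· ^ (μ - 1)), mul_left_comm (u _),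
    integral_const_mul]
  rw [integral_mul_integral_mul_comp_sub hu Measure.absolutelyContinuous_restrict
    hpow.aestronglyMeasurable
    (integrableOn_rpow_mul_autocorrelation hμ0 hμ1 hu.abs hu2.abs)]

theorem integrable_norm_rpow_mul_norm_fourier_sq (hμ0 : 0 ≤ μ) (hμ1 : μ < 1) (hu : Integrable u)
    (hu2 : MemLp u 2) :
    Integrable fun ξ : ℝ => ‖ξ‖ ^ (-μ) * ‖𝓕 (fun x => (u x : ℂ)) ξ‖ ^ 2 := by
  refine integrable_norm_rpow_smul (C := (∫ x, ‖(u x : ℂ)‖) ^ 2) (by simpa using hμ1) (by linarith)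
    (integrable_norm_fourier_sq (f := fun x => (u x : ℂ)) hu.ofReal hu2.ofReal) fun ξ => ?_
  rw [norm_pow, norm_norm]
  gcongr
  exact VectorFourier.norm_fourierIntegral_le_integral_norm _ _ _ _ _

theorem integral_rpow_mul_autocorrelation (hμ0 : 0 < μ) (hμ1 : μ < 1) (hu : Integrable u)
    (hu2 : MemLp u 2) :
    ∫ t in Ioi 0, t ^ (μ - 1) * autocorrelation u t = Real.Gamma μ * (Real.cos (μ * π / 2) *
      ∫ ξ : ℝ, |2 * π * ξ| ^ (-μ) * ‖𝓕 (fun x : ℝ => (u x : ℂ)) ξ‖ ^ 2) := by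
  have hA : (fun t => (autocorrelation u t : ℂ)) =
      𝓕 (fun ξ => ((‖𝓕 (fun x => (u x : ℂ)) ξ‖ ^ 2 : ℝ) : ℂ)) :=
    funext (autocorrelation_eq_fourier_norm_fourier_sq hu hu2)
  have hconv := mellinConvergent_ofReal (integrableOn_rpow_mul_autocorrelation hμ0 hμ1.le hu hu2)
  rw [← Complex.ofReal_re (∫ t in Ioi 0, _), ← mellin_ofReal, hA]
  exact re_mellin_fourier_ofReal hμ0
    (integrable_norm_fourier_sq (f := fun x => (u x : ℂ)) hu.ofReal hu2.ofReal)
    (integrable_norm_rpow_mul_norm_fourier_sq hμ0.le hμ1 hu hu2) (hA ▸ hconv)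

end RiemannLiouville

theorem stmt9_general (μ : ℝ) (hμ0 : 0 < μ) (hμ1 : μ < 1) (u : ℝ → ℝ) (hu : Integrable u)
    (hu2 : MemLp u 2) :
    ((∫ x : ℝ, u x * leftRLIntegral μ u x) =
      Real.cos (μ * Real.pi / 2) *
        ∫ ξ : ℝ, |2 * Real.pi * ξ| ^ (-μ) * ‖𝓕 (fun x : ℝ => (u x : ℂ)) ξ‖ ^ 2) ∧
    0 ≤ ∫ x : ℝ, u x * leftRLIntegral μ u x := by
  have hform : (∫ x : ℝ, u x * leftRLIntegral μ u x) = Real.cos (μ * Real.pi / 2) *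
      ∫ ξ : ℝ, |2 * Real.pi * ξ| ^ (-μ) * ‖𝓕 (fun x : ℝ => (u x : ℂ)) ξ‖ ^ 2 := by
    rw [integral_mul_leftRLIntegral hμ0 hμ1.le hu hu2,
      integral_rpow_mul_autocorrelation hμ0 hμ1 hu hu2, one_div,
      inv_mul_cancel_left₀ (Real.Gamma_pos_of_pos hμ0).ne']
  refine ⟨hform, hform ▸ mul_nonneg ?_ (integral_nonneg fun ξ => by positivity)⟩
  exact Real.cos_nonneg_of_mem_Icc ⟨by nlinarith [Real.pi_pos], by nlinarith [Real.pi_pos]⟩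

theorem stmt9 (μ : ℝ) (hμ0 : 0 < μ) (hμ1 : μ < 1) (u : ℝ → ℝ)
    (hu : ContDiff ℝ (⊤ : ℕ∞) u) (hcs : HasCompactSupport u) :
    ((∫ x : ℝ, u x * leftRLIntegral μ u x) =
      Real.cos (μ * Real.pi / 2) *
        ∫ ξ : ℝ, |2 * Real.pi * ξ| ^ (-μ) * ‖𝓕 (fun x : ℝ => (u x : ℂ)) ξ‖ ^ 2) ∧
    0 ≤ ∫ x : ℝ, u x * leftRLIntegral μ u x :=
  stmt9_general μ hμ0 hμ1 u (hu.continuous.integrable_of_hasCompactSupport hcs)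
    (hu.continuous.memLp_of_hasCompactSupport hcs)
end

section
/- Let a < b be real numbers, 0 < μ < 1, and let u : ℝ → ℝ be smooth with compact support contained in the open interval (a,b). Then the fractional integral form is coercive with respect to the half-order fractional integral norm: ∫_a^b u(x) · (I_{a+}^μ u)(x) dx ≥ cos(μπ/2) · ∫_a^b ((I_{a+}^{μ/2} u)(x))² dx. -/
open MeasureTheory Real Set

/-- Left Riemann–Liouville fractional integral of order `μ` with base point `a`:
`(I_{a+}^μ u)(x) = (1/Γ(μ)) ∫_a^x (x−s)^{μ−1} u(s) ds`. -/
noncomputable def leftRL (a μ : ℝ) (u : ℝ → ℝ) (x : ℝ) : ℝ :=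
  (1 / Real.Gamma μ) * ∫ s in a..x, (x - s) ^ (μ - 1) * u s

/-!
Write `k_μ(x) = x₊ ^ (μ - 1) / Γ(μ)` for the convolution kernel of the fractional integral. For
`0 < μ < 1` the overlaps of the half-order kernels are computed by a Beta integral and the
reflection formula:
`2 cos(μπ/2) ∫ k_{μ/2}(x - s) k_{μ/2}(x - t) dx = k_μ(s - t) + k_μ(t - s)`.
Integrating this against `u(s) u(t)` yields, on the whole line, the identity
`cos(μπ/2) ‖k_{μ/2} ⋆ u‖² = ⟨u, k_μ ⋆ u⟩`. If `u` vanishes off `(a, b)`, the right-hand side is an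
integral over `(a, b)`, while restricting the left-hand side to `(a, b)` can only decrease it.
-/

open ProbabilityTheory (beta beta_pos)

section GammaBeta

theorem cos_mul_pi_div_two_pos {μ : ℝ} (hμ0 : 0 < μ) (hμ1 : μ < 1) : 0 < cos (μ * π / 2) :=
  cos_pos_of_mem_Ioo ⟨by nlinarith [pi_pos], by nlinarith [pi_pos]⟩

theorem Gamma_mul_Gamma_one_sub_eq_two_mul_cos_mul {ν : ℝ} (hcos : cos (π * ν) ≠ 0) :
    Gamma ν * Gamma (1 - ν) = 2 * cos (π * ν) * (Gamma (2 * ν) * Gamma (1 - 2 * ν)) := by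
  rw [Gamma_mul_Gamma_one_sub, Gamma_mul_Gamma_one_sub, mul_left_comm π, sin_two_mul]
  field_simp

theorem two_mul_cos_mul_beta_div_sq_Gamma {μ : ℝ} (hμ0 : 0 < μ) (hμ1 : μ < 1) :
    2 * cos (μ * π / 2) * (beta (μ / 2) (1 - μ) / Gamma (μ / 2) ^ 2) = 1 / Gamma μ := by
  have hangle : π * (μ / 2) = μ * π / 2 := by ring
  have hcos : 0 < cos (π * (μ / 2)) := hangle ▸ cos_mul_pi_div_two_pos hμ0 hμ1
  have hrefl := Gamma_mul_Gamma_one_sub_eq_two_mul_cos_mul hcos.ne'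
  rw [mul_div_cancel₀ μ two_ne_zero, hangle] at hrefl
  have h1 : 0 < Gamma (μ / 2) := Gamma_pos_of_pos (by linarith)
  have h2 : 0 < Gamma (1 - μ / 2) := Gamma_pos_of_pos (by linarith)
  calc 2 * cos (μ * π / 2) * (beta (μ / 2) (1 - μ) / Gamma (μ / 2) ^ 2)
      = 2 * cos (μ * π / 2) * (Gamma μ * Gamma (1 - μ)) /
          (Gamma (μ / 2) * Gamma (1 - μ / 2) * Gamma μ) := by
        rw [beta, show μ / 2 + (1 - μ) = 1 - μ / 2 by ring]
        field_simp
    _ = 1 / Gamma μ := by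
        rw [← hrefl, ← div_div, div_self (mul_pos h1 h2).ne']

theorem lintegral_rpow_mul_exp_neg_mul_Ioi {c r : ℝ} (hc : 0 < c) (hr : 0 < r) :
    ∫⁻ t in Ioi (0 : ℝ), ENNReal.ofReal (t ^ (c - 1) * exp (-(r * t))) =
      ENNReal.ofReal (r ^ (-c) * Gamma c) := by
  have hval := integral_rpow_mul_exp_neg_mul_Ioi hc hr
  rw [one_div, inv_rpow hr.le, ← rpow_neg hr.le] at hval
  rw [← hval, ofReal_integral_eq_lintegral_ofReal]
  · refine .of_integral_ne_zero ?_
    rw [hval]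
    positivity
  · filter_upwards [self_mem_ae_restrict measurableSet_Ioi] with t (ht : 0 < t)
    positivity

theorem lintegral_rpow_mul_exp_neg_add_mul_Ioi {c r : ℝ} (hc : 0 < c) (hr : 0 < r) (d : ℝ) :
    ∫⁻ y in Ioi (0 : ℝ), ENNReal.ofReal (y ^ (c - 1) * exp (-((y + d) * r))) =
      ENNReal.ofReal (exp (-(d * r)) * (r ^ (-c) * Gamma c)) := by
  have hsplit : ∀ y, y ^ (c - 1) * exp (-((y + d) * r)) =
      exp (-(d * r)) * (y ^ (c - 1) * exp (-(r * y))) := fun y => by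
    rw [show -((y + d) * r) = -(d * r) + -(r * y) by ring, exp_add]
    ring
  simp_rw [hsplit, ENNReal.ofReal_mul (exp_pos (-(d * r))).le]
  rw [lintegral_const_mul _ (by fun_prop), lintegral_rpow_mul_exp_neg_mul_Ioi hc hr]

/- Writing `Γ(p + q) (y + d) ^ (-(p + q))` as a Gamma integral in `t` and exchanging the integrals
leaves a Gamma integral in `y`, then one in `t`. -/
theorem lintegral_rpow_mul_add_rpow_Ioi {p q d : ℝ} (hp : 0 < p) (hq : 0 < q) (hd : 0 < d) :
    ∫⁻ y in Ioi (0 : ℝ), ENNReal.ofReal (y ^ (p - 1) * (y + d) ^ (-(p + q))) =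
      ENNReal.ofReal (beta p q * d ^ (-q)) := by
  have integral_t : ∀ y ∈ Ioi (0 : ℝ), ENNReal.ofReal (Gamma (p + q)) *
      ENNReal.ofReal (y ^ (p - 1) * (y + d) ^ (-(p + q))) =
      ∫⁻ t in Ioi (0 : ℝ), ENNReal.ofReal
        (y ^ (p - 1) * (t ^ (p + q - 1) * exp (-((y + d) * t)))) := by
    intro y (hy : 0 < y)
    simp_rw [ENNReal.ofReal_mul (rpow_nonneg hy.le (p - 1))]
    rw [lintegral_const_mul _ (by fun_prop),
      lintegral_rpow_mul_exp_neg_mul_Ioi (add_pos hp hq) (add_pos hy hd),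
      ENNReal.ofReal_mul (by positivity)]
    ring
  have integral_y : ∀ t ∈ Ioi (0 : ℝ), ∫⁻ y in Ioi (0 : ℝ), ENNReal.ofReal
        (y ^ (p - 1) * (t ^ (p + q - 1) * exp (-((y + d) * t)))) =
      ENNReal.ofReal (Gamma p) * ENNReal.ofReal (t ^ (q - 1) * exp (-(d * t))) := by
    intro t (ht : 0 < t)
    have h0 : 0 ≤ t ^ (p + q - 1) := by positivity
    simp_rw [fun y : ℝ => mul_left_comm (y ^ (p - 1)) (t ^ (p + q - 1)), ENNReal.ofReal_mul h0]
    rw [lintegral_const_mul _ (by fun_prop), lintegral_rpow_mul_exp_neg_add_mul_Ioi hp ht,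
      ← ENNReal.ofReal_mul h0, ← ENNReal.ofReal_mul (Gamma_pos_of_pos hp).le,
      show q - 1 = (p + q - 1) + -p by ring, rpow_add ht]
    ring_nf
  have hΓ : 0 < Gamma (p + q) := Gamma_pos_of_pos (add_pos hp hq)
  refine (ENNReal.mul_right_inj (ENNReal.ofReal_pos.2 hΓ).ne' ENNReal.ofReal_ne_top).1 ?_
  rw [← lintegral_const_mul _ (by fun_prop), setLIntegral_congr_fun measurableSet_Ioi integral_t,
    lintegral_lintegral_swap (by fun_prop), setLIntegral_congr_fun measurableSet_Ioi integral_y,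
    lintegral_const_mul _ (by fun_prop), lintegral_rpow_mul_exp_neg_mul_Ioi hq hd,
    ← ENNReal.ofReal_mul (Gamma_pos_of_pos hp).le, ← ENNReal.ofReal_mul hΓ.le, beta]
  congr 1
  field_simp

end GammaBeta

section Kernel

/-- The convolution kernel `x₊ ^ (μ - 1) / Γ(μ)` of the fractional integral of order `μ`. It is
set to be `0` at the origin, whatever `μ`. -/
noncomputable def rlKernel (μ : ℝ) : ℝ → ℝ :=
  (Ioi 0).indicator fun x => x ^ (μ - 1) / Gamma μ

theorem rlKernel_of_pos {μ x : ℝ} (hx : 0 < x) : rlKernel μ x = x ^ (μ - 1) / Gamma μ :=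
  indicator_of_mem hx _

theorem rlKernel_of_nonpos {μ x : ℝ} (hx : x ≤ 0) : rlKernel μ x = 0 :=
  indicator_of_notMem hx.not_gt _

theorem rlKernel_nonneg {μ : ℝ} (hμ : 0 < μ) (x : ℝ) : 0 ≤ rlKernel μ x :=
  indicator_nonneg (fun y (hy : 0 < y) => by positivity) x

@[fun_prop]
theorem measurable_rlKernel (μ : ℝ) : Measurable (rlKernel μ) :=
  Measurable.indicator (by fun_prop) measurableSet_Ioi

theorem integrableOn_rlKernel_Iio {μ : ℝ} (hμ : 0 < μ) (d : ℝ) :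
    IntegrableOn (rlKernel μ) (Iio d) := by
  rw [IntegrableOn, rlKernel, integrable_indicator_iff measurableSet_Ioi, IntegrableOn,
    Measure.restrict_restrict measurableSet_Ioi, Ioi_inter_Iio]
  rcases le_or_gt d 0 with hd | hd
  · simp [Ioo_eq_empty hd.not_gt]
  · exact ((intervalIntegral.integrableOn_Ioo_rpow_iff hd).2 (by linarith)).div_const _

variable {ν ρ μ s t : ℝ}

theorem lintegral_rlKernel_mul_rlKernel (hν : 0 < ν) (hρ : 0 < ρ) (hνρ : ν + ρ < 1)
    (hst : s < t) :
    ∫⁻ x, ENNReal.ofReal (rlKernel ν (x - s) * rlKernel ρ (x - t)) =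
      ENNReal.ofReal (beta ρ (1 - (ν + ρ)) / (Gamma ν * Gamma ρ) * (t - s) ^ (ν + ρ - 1)) := by
  have translate : ∀ y, ENNReal.ofReal (rlKernel ν (y + t - s) * rlKernel ρ (y + t - t)) =
      (Ioi (0 : ℝ)).indicator (fun y => ENNReal.ofReal (1 / (Gamma ν * Gamma ρ)) *
        ENNReal.ofReal (y ^ (ρ - 1) * (y + (t - s)) ^ (-(ρ + (1 - (ν + ρ)))))) y := fun y => by
    rcases le_or_gt y 0 with hy | hy
    · simp [rlKernel_of_nonpos hy, hy.not_gt]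
    · have hts : 0 < y + (t - s) := by linarith
      rw [indicator_of_mem (mem_Ioi.2 hy), ← ENNReal.ofReal_mul (by positivity), add_sub_assoc,
        add_sub_cancel_right, rlKernel_of_pos hts, rlKernel_of_pos hy]
      ring_nf
  rw [← lintegral_add_right_eq_self _ t]
  simp_rw [translate]
  rw [lintegral_indicator measurableSet_Ioi, lintegral_const_mul _ (by fun_prop),
    lintegral_rpow_mul_add_rpow_Ioi hρ (sub_pos.2 hνρ) (sub_pos.2 hst),
    ← ENNReal.ofReal_mul (by positivity), neg_sub]
  congr 1
  ring

theorem integrable_rlKernel_mul_rlKernel (hν : 0 < ν) (hρ : 0 < ρ) (hνρ : ν + ρ < 1)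
    (hst : s ≠ t) : Integrable fun x => rlKernel ν (x - s) * rlKernel ρ (x - t) := by
  wlog h : s < t generalizing s t ν ρ
  · simpa only [mul_comm] using
      this hρ hν (add_comm ν ρ ▸ hνρ) hst.symm (hst.lt_or_gt.resolve_left h)
  refine ⟨by fun_prop, ?_⟩
  rw [hasFiniteIntegral_iff_ofReal (ae_of_all _ fun x =>
    mul_nonneg (rlKernel_nonneg hν _) (rlKernel_nonneg hρ _)),
    lintegral_rlKernel_mul_rlKernel hν hρ hνρ h]
  exact ENNReal.ofReal_lt_top

theorem integral_rlKernel_mul_rlKernel (hν : 0 < ν) (hρ : 0 < ρ) (hνρ : ν + ρ < 1)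
    (hst : s < t) :
    ∫ x, rlKernel ν (x - s) * rlKernel ρ (x - t) =
      beta ρ (1 - (ν + ρ)) / (Gamma ν * Gamma ρ) * (t - s) ^ (ν + ρ - 1) := by
  have hbeta := beta_pos hρ (sub_pos.2 hνρ)
  have : 0 < t - s := sub_pos.2 hst
  rw [integral_eq_lintegral_of_nonneg_ae (ae_of_all _ fun x =>
    mul_nonneg (rlKernel_nonneg hν _) (rlKernel_nonneg hρ _)) (by fun_prop),
    lintegral_rlKernel_mul_rlKernel hν hρ hνρ hst, ENNReal.toReal_ofReal (by positivity)]

theorem two_mul_cos_mul_integral_rlKernel_half_mul_rlKernel_half (hμ0 : 0 < μ) (hμ1 : μ < 1)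
    (hst : s ≠ t) :
    2 * cos (μ * π / 2) * ∫ x, rlKernel (μ / 2) (x - s) * rlKernel (μ / 2) (x - t) =
      rlKernel μ (s - t) + rlKernel μ (t - s) := by
  wlog h : s < t generalizing s t
  · simpa only [mul_comm, add_comm] using this hst.symm (hst.lt_or_gt.resolve_left h)
  rw [integral_rlKernel_mul_rlKernel (half_pos hμ0) (half_pos hμ0) (by rwa [add_halves]) h,
    add_halves, ← sq, ← mul_assoc, two_mul_cos_mul_beta_div_sq_Gamma hμ0 hμ1,
    rlKernel_of_nonpos (sub_nonpos.2 h.le), rlKernel_of_pos (sub_pos.2 h)]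
  ring

end Kernel

section DoubleIntegral

section SquareOfIntegralOperator

variable {α β : Type*} [MeasurableSpace β] {σ : Measure β} [SFinite σ]

theorem integral_prod_mul_mul_eq_sq (f u : β → ℝ) :
    ∫ p : β × β, u p.1 * u p.2 * (f p.1 * f p.2) ∂σ.prod σ = (∫ s, f s * u s ∂σ) ^ 2 := by
  rw [sq, ← integral_prod_mul]
  congr with p
  ring

variable [MeasurableSpace α] {ρ : Measure α} {k : α → β → ℝ} {u : β → ℝ}

theorem integrable_sq_integral_mul
    (h : Integrable (fun z : α × β × β => u z.2.1 * u z.2.2 * (k z.1 z.2.1 * k z.1 z.2.2))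
      (ρ.prod (σ.prod σ))) :
    Integrable (fun x => (∫ s, k x s * u s ∂σ) ^ 2) ρ := by
  simpa only [integral_prod_mul_mul_eq_sq] using h.integral_prod_left

theorem integral_sq_integral_mul [SFinite ρ]
    (h : Integrable (fun z : α × β × β => u z.2.1 * u z.2.2 * (k z.1 z.2.1 * k z.1 z.2.2))
      (ρ.prod (σ.prod σ))) :
    ∫ x, (∫ s, k x s * u s ∂σ) ^ 2 ∂ρ =
      ∫ p : β × β, u p.1 * u p.2 * ∫ x, k x p.1 * k x p.2 ∂ρ ∂σ.prod σ := by
  simp_rw [← integral_prod_mul_mul_eq_sq, ← integral_const_mul]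
  exact integral_integral_swap
    (f := fun x (p : β × β) => u p.1 * u p.2 * (k x p.1 * k x p.2)) h

end SquareOfIntegralOperator

theorem ae_fst_ne_snd {α : Type*} [MeasurableSpace α] [MeasurableEq α] (ρ σ : Measure α)
    [SFinite σ] [NullSingletonClass σ] : ∀ᵐ p ∂ρ.prod σ, p.1 ≠ p.2 := by
  refine (Measure.ae_prod_iff_ae_ae measurableSet_diagonal.compl).2 (ae_of_all _ fun s => ?_)
  exact (Measure.ae_ne σ s).mono fun t ht => ht.symm

/- AM–GM, `2 |u(s) v(t) g(s - t)| ≤ u(s)² |g(s - t)| + v(t)² |g(s - t)|`, reduces the claim to the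
integrability of the convolution integrands of `u²` and `v²` with `|g|`. -/
theorem integrable_mul_mul_comp_sub_s10 {G : Type*} [AddGroup G] [MeasurableSpace G]
    [MeasurableAdd₂ G] [MeasurableNeg G] {ρ : Measure G} [SFinite ρ] [ρ.IsAddRightInvariant]
    [ρ.IsNegInvariant] {u v g : G → ℝ} (hu : MemLp u 2 ρ) (hv : MemLp v 2 ρ)
    (hg : Integrable g ρ) :
    Integrable (fun p : G × G => u p.1 * v p.2 * g (p.1 - p.2)) (ρ.prod ρ) := by
  have hu2 : Integrable (fun p : G × G => u p.1 ^ 2 * ‖g (p.1 - p.2)‖) (ρ.prod ρ) := by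
    simpa only [Function.comp_def, Prod.fst_swap, Prod.snd_swap, neg_sub,
      ContinuousLinearMap.mul_apply'] using
      (hu.integrable_sq.convolution_integrand (.mul ℝ ℝ) hg.norm.comp_neg).swap
  have hv2 : Integrable (fun p : G × G => v p.2 ^ 2 * ‖g (p.1 - p.2)‖) (ρ.prod ρ) :=
    hv.integrable_sq.convolution_integrand (.mul ℝ ℝ) hg.norm
  have hgm : AEStronglyMeasurable (fun p : G × G => g (p.1 - p.2)) (ρ.prod ρ) :=
    hg.aestronglyMeasurable.comp_quasiMeasurePreserving
      (quasiMeasurePreserving_sub_of_right_invariant ρ ρ)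
  refine (hu2.add hv2).mono' ((hu.1.comp_fst.mul hv.1.comp_snd).mul hgm) (ae_of_all _ fun p => ?_)
  have amgm : |u p.1| * |v p.2| ≤ u p.1 ^ 2 + v p.2 ^ 2 := by
    nlinarith [sq_abs (u p.1), sq_abs (v p.2), two_mul_le_add_sq |u p.1| |v p.2|,
      sq_nonneg (u p.1), sq_nonneg (v p.2)]
  simpa only [norm_mul, Pi.add_apply, ← add_mul, norm_eq_abs] using
    mul_le_mul_of_nonneg_right amgm (abs_nonneg (g (p.1 - p.2)))

end DoubleIntegral

section Liouville

/-- The Riemann–Liouville fractional integral `I_{-∞+}^μ u` with base point `-∞`, also known as the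
Liouville fractional integral: the convolution of `u` with `rlKernel μ`. -/
noncomputable def liouvilleIntegral (μ : ℝ) (u : ℝ → ℝ) (x : ℝ) : ℝ :=
  ∫ s, rlKernel μ (x - s) * u s

theorem leftRL_eq_liouvilleIntegral_indicator {a b x : ℝ} (μ : ℝ) (u : ℝ → ℝ)
    (hx : x ∈ Ioo a b) :
    leftRL a μ u x = liouvilleIntegral μ ((Ioo a b).indicator u) x := by
  rw [leftRL, liouvilleIntegral, intervalIntegral.integral_of_le hx.1.le,
    integral_Ioc_eq_integral_Ioo, ← integral_indicator measurableSet_Ioo, ← integral_const_mul]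
  congr with s
  rcases le_or_gt x s with hxs | hsx
  · simp [rlKernel_of_nonpos (sub_nonpos.2 hxs), hxs.not_gt]
  · rw [rlKernel_of_pos (sub_pos.2 hsx)]
    by_cases has : a < s
    · rw [indicator_of_mem (mem_Ioo.2 ⟨has, hsx⟩),
        indicator_of_mem (mem_Ioo.2 ⟨has, hsx.trans hx.2⟩)]
      ring
    · simp [has]

variable {μ : ℝ} {u : ℝ → ℝ}

theorem integrable_mul_mul_rlKernel_of_memLp {a b : ℝ} (hμ : 0 < μ) (hu : MemLp u 2)
    (hsupp : Function.support u ⊆ Ioo a b) :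
    Integrable fun p : ℝ × ℝ => u p.1 * u p.2 * rlKernel μ (p.1 - p.2) := by
  have hk : Integrable ((Iio (b - a)).indicator (rlKernel μ)) :=
    (integrable_indicator_iff measurableSet_Iio).2 (integrableOn_rlKernel_Iio hμ _)
  rw [Measure.volume_eq_prod]
  refine (integrable_mul_mul_comp_sub_s10 hu hu hk).congr (ae_of_all _ fun p => ?_)
  by_cases h1 : u p.1 = 0
  · simp [h1]
  by_cases h2 : u p.2 = 0
  · simp [h2]
  have hlt : p.1 - p.2 < b - a := sub_lt_sub (hsupp h1).2 (hsupp h2).1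
  simp only [indicator_of_mem (mem_Iio.2 hlt)]

theorem integrable_mul_mul_rlKernel_swap
    (hE : Integrable fun p : ℝ × ℝ => u p.1 * u p.2 * rlKernel μ (p.1 - p.2)) :
    Integrable fun p : ℝ × ℝ => u p.1 * u p.2 * rlKernel μ (p.2 - p.1) :=
  hE.swap.congr (ae_of_all _ fun p => by
    simp only [Function.comp_apply, Prod.fst_swap, Prod.snd_swap, mul_comm (u p.2)])

theorem two_mul_integral_mul_liouvilleIntegral
    (hE : Integrable fun p : ℝ × ℝ => u p.1 * u p.2 * rlKernel μ (p.1 - p.2)) :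
    2 * ∫ x, u x * liouvilleIntegral μ u x =
      ∫ p : ℝ × ℝ, u p.1 * u p.2 * (rlKernel μ (p.1 - p.2) + rlKernel μ (p.2 - p.1)) := by
  have hiter : ∫ x, u x * liouvilleIntegral μ u x =
      ∫ p : ℝ × ℝ, u p.1 * u p.2 * rlKernel μ (p.1 - p.2) := by
    rw [Measure.volume_eq_prod, integral_prod _ hE]
    simp only [liouvilleIntegral, ← integral_const_mul, mul_assoc, mul_comm]
  have hswap : ∫ p : ℝ × ℝ, u p.1 * u p.2 * rlKernel μ (p.2 - p.1) =
      ∫ p : ℝ × ℝ, u p.1 * u p.2 * rlKernel μ (p.1 - p.2) := by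
    simpa only [Measure.volume_eq_prod, Prod.fst_swap, Prod.snd_swap, mul_comm] using
      integral_prod_swap (μ := volume) (ν := volume)
        fun p : ℝ × ℝ => u p.1 * u p.2 * rlKernel μ (p.1 - p.2)
  simp_rw [mul_add]
  rw [integral_add hE (integrable_mul_mul_rlKernel_swap hE), hswap, hiter, two_mul]

theorem integrable_mul_mul_rlKernel_half_mul_rlKernel_half (hμ0 : 0 < μ) (hμ1 : μ < 1)
    (hu : AEStronglyMeasurable u)
    (hE : Integrable fun p : ℝ × ℝ => u p.1 * u p.2 * rlKernel μ (p.1 - p.2)) :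
    Integrable (fun z : ℝ × ℝ × ℝ => u z.2.1 * u z.2.2 *
      (rlKernel (μ / 2) (z.1 - z.2.1) * rlKernel (μ / 2) (z.1 - z.2.2)))
      (volume.prod (volume.prod volume)) := by
  have hk := rlKernel_nonneg (half_pos hμ0)
  have hmeas : AEStronglyMeasurable (fun z : ℝ × ℝ × ℝ => u z.2.1 * u z.2.2 *
      (rlKernel (μ / 2) (z.1 - z.2.1) * rlKernel (μ / 2) (z.1 - z.2.2)))
      (volume.prod (volume.prod volume)) :=
    (hu.comp_fst.mul hu.comp_snd).comp_snd.mul (Measurable.aestronglyMeasurable (by fun_prop))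
  refine (integrable_prod_iff' hmeas).2 ⟨?_, ?_⟩
  · filter_upwards [ae_fst_ne_snd volume volume] with p hp
    exact (integrable_rlKernel_mul_rlKernel (half_pos hμ0) (half_pos hμ0)
      (by rwa [add_halves]) hp).const_mul _
  · refine ((hE.norm.add (integrable_mul_mul_rlKernel_swap hE).norm).const_mul
      (2 * cos (μ * π / 2))⁻¹).congr ?_
    filter_upwards [ae_fst_ne_snd volume volume] with p hp
    have hcos := cos_mul_pi_div_two_pos hμ0 hμ1
    simp only [norm_mul (u p.1 * u p.2), norm_of_nonneg (mul_nonneg (hk _) (hk _)),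
      norm_of_nonneg (rlKernel_nonneg hμ0 _), integral_const_mul, Pi.add_apply, ← mul_add]
    rw [← two_mul_cos_mul_integral_rlKernel_half_mul_rlKernel_half hμ0 hμ1 hp]
    field_simp

theorem integrable_sq_liouvilleIntegral_half (hμ0 : 0 < μ) (hμ1 : μ < 1)
    (hu : AEStronglyMeasurable u)
    (hE : Integrable fun p : ℝ × ℝ => u p.1 * u p.2 * rlKernel μ (p.1 - p.2)) :
    Integrable fun x => liouvilleIntegral (μ / 2) u x ^ 2 :=
  integrable_sq_integral_mul (k := fun x s => rlKernel (μ / 2) (x - s))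
    (integrable_mul_mul_rlKernel_half_mul_rlKernel_half hμ0 hμ1 hu hE)

theorem cos_mul_integral_sq_liouvilleIntegral_half (hμ0 : 0 < μ) (hμ1 : μ < 1)
    (hu : AEStronglyMeasurable u)
    (hE : Integrable fun p : ℝ × ℝ => u p.1 * u p.2 * rlKernel μ (p.1 - p.2)) :
    cos (μ * π / 2) * ∫ x, liouvilleIntegral (μ / 2) u x ^ 2 =
      ∫ x, u x * liouvilleIntegral μ u x := by
  refine mul_left_cancel₀ (two_ne_zero' ℝ) ?_
  rw [two_mul_integral_mul_liouvilleIntegral hE, ← mul_assoc]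
  simp only [liouvilleIntegral]
  rw [integral_sq_integral_mul (k := fun x s => rlKernel (μ / 2) (x - s))
    (integrable_mul_mul_rlKernel_half_mul_rlKernel_half hμ0 hμ1 hu hE), ← integral_const_mul]
  refine integral_congr_ae ?_
  filter_upwards [ae_fst_ne_snd volume volume] with p hp
  rw [mul_left_comm, two_mul_cos_mul_integral_rlKernel_half_mul_rlKernel_half hμ0 hμ1 hp]

end Liouville

theorem stmt10_general {a b μ : ℝ} (hμ0 : 0 < μ) (hμ1 : μ < 1) {u : ℝ → ℝ}
    (hu : MemLp u 2 (volume.restrict (Ioo a b))) :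
    ∫ x in Ioo a b, u x * leftRL a μ u x ≥
      cos (μ * π / 2) * ∫ x in Ioo a b, leftRL a (μ / 2) u x ^ 2 := by
  set v := (Ioo a b).indicator u with hv
  have hvL2 : MemLp v 2 := (memLp_indicator_iff_restrict measurableSet_Ioo).2 hu
  have hE := integrable_mul_mul_rlKernel_of_memLp hμ0 hvL2 support_indicator_subset
  have hleft : ∫ x in Ioo a b, u x * leftRL a μ u x = ∫ x, v x * liouvilleIntegral μ v x := by
    rw [← integral_indicator measurableSet_Ioo]
    congr with x
    by_cases hx : x ∈ Ioo a b
    · simp [hv, hx, leftRL_eq_liouvilleIntegral_indicator μ u hx]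
    · simp [hv, hx]
  calc cos (μ * π / 2) * ∫ x in Ioo a b, leftRL a (μ / 2) u x ^ 2
      = cos (μ * π / 2) * ∫ x in Ioo a b, liouvilleIntegral (μ / 2) v x ^ 2 := by
        congr 1
        exact setIntegral_congr_fun measurableSet_Ioo fun x hx => by
          simp only [leftRL_eq_liouvilleIntegral_indicator _ u hx, hv]
    _ ≤ cos (μ * π / 2) * ∫ x, liouvilleIntegral (μ / 2) v x ^ 2 := by
        refine mul_le_mul_of_nonneg_left ?_ (cos_mul_pi_div_two_pos hμ0 hμ1).le
        exact setIntegral_le_integral (integrable_sq_liouvilleIntegral_half hμ0 hμ1 hvL2.1 hE)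
          (ae_of_all _ fun x => sq_nonneg _)
    _ = ∫ x in Ioo a b, u x * leftRL a μ u x := by
        rw [cos_mul_integral_sq_liouvilleIntegral_half hμ0 hμ1 hvL2.1 hE, hleft]

theorem stmt10 (a b μ : ℝ) (hab : a < b) (hμ0 : 0 < μ) (hμ1 : μ < 1)
    (u : ℝ → ℝ) (hu : ContDiff ℝ (⊤ : ℕ∞) u) (hcs : HasCompactSupport u)
    (hsupp : tsupport u ⊆ Set.Ioo a b) :
    ∫ x in Set.Ioo a b, u x * leftRL a μ u x ≥
      Real.cos (μ * Real.pi / 2) * ∫ x in Set.Ioo a b, (leftRL a (μ / 2) u x) ^ 2 :=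
  stmt10_general hμ0 hμ1 (hu.continuous.memLp_of_hasCompactSupport hcs)
end
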